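/- arXiv:2206.09139 — 2 statements merged into one kernel-verified Lean document; each statement's English description precedes it below -/
import Mathlib

section
/- Let R_f, R_e be real n×n matrices with R_f R_eᵀ = R_e R_fᵀ positive semidefinite and rank [R_f R_e] = n, and let R = {(f,e) ∈ ℝ^n × ℝ^n : R_f f − R_e e = 0} be the associated linear resistive structure. Then R admits the image representation R = {(R_eᵀ λ, R_fᵀ λ) : λ ∈ ℝ^n}, and consequently ⟨e, f⟩ ≥ 0 for every (f,e) ∈ R. -/
/-- The duality pairing (standard inner product) on `ℝ^n`. -/
noncomputable def dot {n : ℕ} (e f : Fin n → ℝ) : ℝ := ∑ i, e i * f i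

/-!
Symmetry of `A * Bᴴ` says exactly that every `(Bᴴ l, Aᴴ l)` solves `A f = B e`. Full row rank of
`[A B]` makes `(f, e) ↦ A f - B e` surjective, so the solution space has dimension `2n - n = n`, and
makes the adjoint map `l ↦ (Bᴴ l, Aᴴ l)` injective, so its range has dimension `n` as well and fills
the solution space. On that range the pairing of `e` with `f` is the quadratic form of `A * Bᴴ`.
-/

open Function Module
open scoped Matrix

lemma range_eq_ker_of_finrank_add_finrank_eq {K U V W : Type*} [DivisionRing K]
    [AddCommGroup U] [Module K U] [AddCommGroup V] [Module K V] [FiniteDimensional K V]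
    [AddCommGroup W] [Module K W] {f : U →ₗ[K] V} {g : V →ₗ[K] W} (hf : Injective f)
    (hg : Surjective g) (hgf : g ∘ₗ f = 0) (hdim : finrank K U + finrank K W = finrank K V) :
    LinearMap.range f = LinearMap.ker g := by
  apply Submodule.eq_of_le_of_finrank_eq (LinearMap.range_le_ker_iff.mpr hgf)
  have hrank := LinearMap.finrank_range_of_inj hf
  have hnullity := g.finrank_range_add_finrank_ker
  rw [LinearMap.range_eq_top.mpr hg, finrank_top] at hnullity
  omega

lemma range_mulVecLin_fromCols {R m n₁ n₂ : Type*} [CommSemiring R] [Fintype n₁] [Fintype n₂]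
    (A : Matrix m n₁ R) (B : Matrix m n₂ R) :
    LinearMap.range (Matrix.fromCols A B).mulVecLin =
      LinearMap.range A.mulVecLin ⊔ LinearMap.range B.mulVecLin := by
  have hfactor : (Matrix.fromCols A B).mulVecLin =
      A.mulVecLin.coprod B.mulVecLin ∘ₗ
        (LinearEquiv.sumArrowLequivProdArrow n₁ n₂ R R).toLinearMap :=
    LinearMap.ext (Matrix.fromCols_mulVec A B)
  rw [hfactor, LinearEquiv.range_comp, LinearMap.range_coprod]

section FullRowRank

variable {K m n : Type*} [Field K] [Fintype m] [Fintype n] {M : Matrix m n K}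

lemma range_mulVecLin_eq_top_of_rank_eq_card (hM : M.rank = Fintype.card m) :
    LinearMap.range M.mulVecLin = ⊤ :=
  Submodule.eq_top_of_finrank_eq (hM.trans (finrank_fintype_fun_eq_card K).symm)

lemma conjTranspose_mulVec_injective_of_rank_eq_card [StarRing K]
    (hM : M.rank = Fintype.card m) : Injective Mᴴ.mulVec := by
  classical
  obtain ⟨N, hMN⟩ := Matrix.mulVec_surjective_iff_exists_right_inverse.mp
    (LinearMap.range_eq_top.mp (range_mulVecLin_eq_top_of_rank_eq_card hM))
  have hNM : Nᴴ * Mᴴ = 1 := by rw [← Matrix.conjTranspose_mul, hMN, Matrix.conjTranspose_one]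
  exact LeftInverse.injective (g := Nᴴ.mulVec) fun l => by
    rw [Matrix.mulVec_mulVec, hNM, Matrix.one_mulVec]

end FullRowRank

section ResistiveStructure

variable {K n : Type*} [Field K] [Fintype n] {A B : Matrix n n K}

/-- The map `(f, e) ↦ A f - B e`, whose kernel is the resistive structure of `A` and `B`. -/
def resistiveMap (A B : Matrix n n K) : (n → K) × (n → K) →ₗ[K] n → K :=
  A.mulVecLin.coprod (-B.mulVecLin)

lemma resistiveMap_apply (p : (n → K) × (n → K)) :
    resistiveMap A B p = A *ᵥ p.1 - B *ᵥ p.2 :=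
  (sub_eq_add_neg _ _).symm

lemma resistiveMap_surjective (hrank : (Matrix.fromCols A B).rank = Fintype.card n) :
    Surjective (resistiveMap A B) := by
  rw [← LinearMap.range_eq_top, resistiveMap, LinearMap.range_coprod, LinearMap.range_neg,
    ← range_mulVecLin_fromCols, range_mulVecLin_eq_top_of_rank_eq_card hrank]

variable [StarRing K]

/-- The parametrization `l ↦ (Bᴴ l, Aᴴ l)` of flow-effort pairs. It uses conjugate transposes so
that real and complex structures are covered alike; over `ℝ` they are plain transposes. -/
def resistiveParam (A B : Matrix n n K) : (n → K) →ₗ[K] (n → K) × (n → K) :=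
  Bᴴ.mulVecLin.prod Aᴴ.mulVecLin

lemma resistiveParam_apply (l : n → K) : resistiveParam A B l = (Bᴴ *ᵥ l, Aᴴ *ᵥ l) :=
  rfl

lemma resistiveParam_injective (hrank : (Matrix.fromCols A B).rank = Fintype.card n) :
    Injective (resistiveParam A B) := by
  intro l l' h
  obtain ⟨hB, hA⟩ := Prod.ext_iff.mp h
  apply conjTranspose_mulVec_injective_of_rank_eq_card hrank
  rw [Matrix.conjTranspose_fromCols_eq_fromRows_conjTranspose, Matrix.fromRows_mulVec,
    Matrix.fromRows_mulVec]
  exact congrArg₂ Sum.elim hA hB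

lemma resistiveMap_comp_resistiveParam (hsym : A * Bᴴ = B * Aᴴ) :
    resistiveMap A B ∘ₗ resistiveParam A B = 0 := by
  ext1 l
  rw [LinearMap.comp_apply, resistiveParam_apply, resistiveMap_apply, Matrix.mulVec_mulVec,
    Matrix.mulVec_mulVec, hsym, sub_self, LinearMap.zero_apply]

theorem range_resistiveParam_eq_ker_resistiveMap (hsym : A * Bᴴ = B * Aᴴ)
    (hrank : (Matrix.fromCols A B).rank = Fintype.card n) :
    LinearMap.range (resistiveParam A B) = LinearMap.ker (resistiveMap A B) :=
  range_eq_ker_of_finrank_add_finrank_eq (resistiveParam_injective hrank)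
    (resistiveMap_surjective hrank) (resistiveMap_comp_resistiveParam hsym) finrank_prod.symm

lemma star_dotProduct_resistiveParam (l : n → K) :
    star (resistiveParam A B l).2 ⬝ᵥ (resistiveParam A B l).1 =
      star l ⬝ᵥ ((A * Bᴴ) *ᵥ l) := by
  rw [resistiveParam_apply, Matrix.star_mulVec, Matrix.conjTranspose_conjTranspose,
    ← Matrix.dotProduct_mulVec, Matrix.mulVec_mulVec]

theorem linearResistive_image_repr_general [PartialOrder K] (hpsd : (A * Bᴴ).PosSemidef)
    (hrank : (Matrix.fromCols A B).rank = Fintype.card n) :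
    {p : (n → K) × (n → K) | A *ᵥ p.1 - B *ᵥ p.2 = 0} =
      {p : (n → K) × (n → K) | ∃ l : n → K, p = (Bᴴ *ᵥ l, Aᴴ *ᵥ l)} ∧
    ∀ p : (n → K) × (n → K), A *ᵥ p.1 - B *ᵥ p.2 = 0 → 0 ≤ star p.2 ⬝ᵥ p.1 := by
  have hsym : A * Bᴴ = B * Aᴴ := by
    rw [← hpsd.isHermitian.eq, Matrix.conjTranspose_mul, Matrix.conjTranspose_conjTranspose]
  have hmem (p : (n → K) × (n → K)) :
      A *ᵥ p.1 - B *ᵥ p.2 = 0 ↔ ∃ l, resistiveParam A B l = p := by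
    rw [← resistiveMap_apply, ← LinearMap.mem_ker,
      ← range_resistiveParam_eq_ker_resistiveMap hsym hrank, LinearMap.mem_range]
  refine ⟨Set.ext fun p => (hmem p).trans (exists_congr fun _ => eq_comm), fun p hp => ?_⟩
  obtain ⟨l, rfl⟩ := (hmem p).mp hp
  rw [star_dotProduct_resistiveParam]
  exact hpsd.dotProduct_mulVec_nonneg l

end ResistiveStructure

/-- A linear resistive structure `R = {(f,e) : R_f f − R_e e = 0}` with
`R_f R_eᵀ = R_e R_fᵀ ⪰ 0` and `rank [R_f R_e] = n` admits the image
representation `R = {(R_eᵀ λ, R_fᵀ λ)}`, and consequently `⟨e, f⟩ ≥ 0` on `R`. -/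
theorem linearResistive_image_repr {n : ℕ} (Rf Re : Matrix (Fin n) (Fin n) ℝ)
    (hsym : Rf * Re.transpose = Re * Rf.transpose)
    (hpsd : (Rf * Re.transpose).PosSemidef)
    (hrank : (Matrix.fromCols Rf Re).rank = n) :
    {p : (Fin n → ℝ) × (Fin n → ℝ) | Rf.mulVec p.1 - Re.mulVec p.2 = 0} =
      {p : (Fin n → ℝ) × (Fin n → ℝ) | ∃ l : Fin n → ℝ,
        p = (Re.transpose.mulVec l, Rf.transpose.mulVec l)} ∧
    ∀ p : (Fin n → ℝ) × (Fin n → ℝ),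
      Rf.mulVec p.1 - Re.mulVec p.2 = 0 → 0 ≤ dot p.2 p.1 := by
  simp only [← Matrix.conjTranspose_eq_transpose_of_trivial] at hpsd ⊢
  exact linearResistive_image_repr_general hpsd (hrank.trans (Fintype.card_fin n).symm)
end

section
/- Let R ⊆ ℝ^n × ℝ^n be a linear resistive structure given by n×n matrices R_f, R_e with R_f R_eᵀ = R_e R_fᵀ ⪰ 0 and rank [R_f R_e] = n, and let R₀ = R₀ᵀ ⪰ 0 be any symmetric positive semidefinite matrix satisfying R_e R₀ R_eᵀ = R_e R_fᵀ. Define φ_R : ℝ^n → (−∞,+∞] by φ_R(f) = ½ fᵀ R₀ f if f ∈ im R_eᵀ and φ_R(f) = +∞ otherwise. Then φ_R is a proper lower semicontinuous convex function and R = {(f,e) : e ∈ ∂φ_R(f)}; in particular, R is maximal cyclically monotone. -/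
open scoped Classical

/-- The subdifferential of `φ` at `f` w.r.t. a pairing `p`. -/
def subdiff {α : Type*} [AddCommGroup α] (p : α → α → ℝ) (φ : α → EReal) (f : α) :
    Set α :=
  {e | φ f ≠ ⊤ ∧ ∀ f', φ f + ((p e (f' - f) : ℝ) : EReal) ≤ φ f'}

/-- Proper, lower semicontinuous, convex extended-real-valued function. -/
def ProperLscConvex {α : Type*} [AddCommGroup α] [Module ℝ α] [TopologicalSpace α]
    (φ : α → EReal) : Prop :=
  (∃ x, φ x ≠ ⊤) ∧ (∀ x, φ x ≠ ⊥) ∧ LowerSemicontinuous φ ∧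
    ∀ x y : α, ∀ t : ℝ, 0 ≤ t → t ≤ 1 →
      φ (t • x + (1 - t) • y) ≤ (t : EReal) * φ x + ((1 - t : ℝ) : EReal) * φ y

/-- Cyclically monotone relation `M ⊆ F × E` (elements `(f, e)`). -/
def CycMono2 {n : ℕ} (M : Set ((Fin n → ℝ) × (Fin n → ℝ))) : Prop :=
  ∀ m : ℕ, 1 ≤ m → ∀ (f e : ℕ → Fin n → ℝ),
    (∀ i ≤ m, (f i, e i) ∈ M) → f (m + 1) = f 0 →
    0 ≤ ∑ i ∈ Finset.range (m + 1), dot (e i) (f i - f (i + 1))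

/-- Maximal cyclically monotone relation. -/
def MaxCycMono2 {n : ℕ} (M : Set ((Fin n → ℝ) × (Fin n → ℝ))) : Prop :=
  CycMono2 M ∧ ∀ M', CycMono2 M' → M ⊆ M' → M' = M

/-- The generating function `φ_R(f) = ½ fᵀ R₀ f` on `im R_eᵀ`, `+∞` elsewhere. -/
noncomputable def phiR {n : ℕ} (Re R0 : Matrix (Fin n) (Fin n) ℝ) :
    (Fin n → ℝ) → EReal :=
  fun f => if ∃ l : Fin n → ℝ, f = Re.transpose.mulVec l
    then (((1 / 2) * dot f (R0.mulVec f) : ℝ) : EReal) else ⊤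

/-!
Since `R_f R_eᵀ ⪰ 0`, the kernel of `(R_f + R_e)ᵀ` is that of `[R_f  R_e]ᵀ`, so by the rank
condition every `v ∈ ℝ^n` is of the form `R_eᵀ l + R_fᵀ l`, and from this `R = {(R_eᵀ l, R_fᵀ l)}`.
By Minty's argument, a cyclically monotone relation cannot properly contain a relation in which the
sums `f + e` exhaust `ℝ^n`. As `∂φ_R` is cyclically monotone, both `R = ∂φ_R` and the maximality of
`R` follow from the inclusion `R ⊆ ∂φ_R`. In the parameter `l` the latter is the tangent inequality
for the positive semidefinite form `lᵀ R_e R₀ R_eᵀ l`.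
-/

open Matrix

section KernelAndImageRepresentation

variable {m n K : Type*} [Fintype m] [Fintype n]

theorem eq_zero_of_dotProduct_self_nonpos [Ring K] [LinearOrder K] [IsStrictOrderedRing K]
    {v : n → K} (hv : v ⬝ᵥ v ≤ 0) : v = 0 :=
  dotProduct_self_eq_zero.1 <| hv.antisymm <| Finset.sum_nonneg fun i _ => mul_self_nonneg (v i)

theorem rank_eq_of_ker_mulVecLin_eq {k l : Type*} [Field K] {A : Matrix k n K} {B : Matrix l n K}
    (hker : A.mulVecLin.ker = B.mulVecLin.ker) : A.rank = B.rank := by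
  have hA := A.mulVecLin.finrank_range_add_finrank_ker
  have hB := B.mulVecLin.finrank_range_add_finrank_ker
  rw [hker] at hA
  exact Nat.add_right_cancel (hA.trans hB.symm)

theorem rank_add_eq_rank_fromCols [Field K] [LinearOrder K] [IsStrictOrderedRing K]
    {A B : Matrix m n K} (hAB : ∀ x, 0 ≤ x ⬝ᵥ (A * Bᵀ) *ᵥ x) :
    (A + B).rank = (fromCols A B).rank := by
  rw [← rank_transpose, ← rank_transpose (fromCols A B)]
  refine rank_eq_of_ker_mulVecLin_eq (Submodule.ext fun x => ?_)
  have hcols : (fromCols A B)ᵀ *ᵥ x = 0 ↔ Aᵀ *ᵥ x = 0 ∧ Bᵀ *ᵥ x = 0 := by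
    simp [transpose_fromCols, fromRows_mulVec, funext_iff]
  rw [LinearMap.mem_ker, LinearMap.mem_ker, mulVecLin_apply, mulVecLin_apply, hcols, transpose_add,
    add_mulVec]
  refine ⟨fun h => ?_, fun ⟨hA, hB⟩ => by rw [hA, hB, add_zero]⟩
  have hneg : Bᵀ *ᵥ x ⬝ᵥ Bᵀ *ᵥ x = -(x ⬝ᵥ (A * Bᵀ) *ᵥ x) := by
    rw [← mulVec_mulVec, dotProduct_mulVec x, ← mulVec_transpose, eq_neg_of_add_eq_zero_left h,
      neg_dotProduct, neg_neg]
  have hB : Bᵀ *ᵥ x = 0 :=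
    eq_zero_of_dotProduct_self_nonpos (hneg.trans_le (neg_nonpos.2 (hAB x)))
  exact ⟨by rwa [hB, add_zero] at h, hB⟩

theorem transpose_mulVec_surjective_of_rank_eq_card [Field K] {A : Matrix m n K}
    (hA : A.rank = Fintype.card n) : Function.Surjective Aᵀ.mulVec := by
  have hrange : Aᵀ.mulVecLin.range = ⊤ := Submodule.eq_top_of_finrank_eq <| by
    rw [Module.finrank_fintype_fun_eq_card, ← hA, ← rank_transpose, rank]
  exact LinearMap.range_eq_top.1 hrange

theorem transpose_add_mulVec_surjective [Field K] [LinearOrder K] [IsStrictOrderedRing K]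
    {A B : Matrix m n K} (hAB : ∀ x, 0 ≤ x ⬝ᵥ (A * Bᵀ) *ᵥ x)
    (hrank : (fromCols A B).rank = Fintype.card n) : Function.Surjective (A + B)ᵀ.mulVec :=
  transpose_mulVec_surjective_of_rank_eq_card ((rank_add_eq_rank_fromCols hAB).trans hrank)

theorem mulVec_injective_of_transpose_mulVec_surjective [CommRing K] {A : Matrix m n K}
    (hA : Function.Surjective Aᵀ.mulVec) : Function.Injective A.mulVec := by
  rw [← coe_mulVecLin, injective_iff_map_eq_zero]
  refine fun x hx => dotProduct_eq_zero x fun v => ?_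
  obtain ⟨l, rfl⟩ := hA v
  rw [mulVecLin_apply] at hx
  rw [dotProduct_mulVec, vecMul_transpose, hx, zero_dotProduct]

theorem mulVec_sub_mulVec_eq_zero_iff_exists_transpose [CommRing K] {A B : Matrix m n K}
    (hsymm : A * Bᵀ = B * Aᵀ) (hsurj : Function.Surjective (A + B)ᵀ.mulVec) {f e : n → K} :
    A *ᵥ f - B *ᵥ e = 0 ↔ ∃ l, f = Bᵀ *ᵥ l ∧ e = Aᵀ *ᵥ l := by
  have hcross : ∀ l, A *ᵥ (Bᵀ *ᵥ l) = B *ᵥ (Aᵀ *ᵥ l) := by simp [hsymm]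
  constructor
  · intro h
    obtain ⟨l, hl⟩ := hsurj (f + e)
    replace hl : Aᵀ *ᵥ l + Bᵀ *ᵥ l = f + e := by rw [← hl, transpose_add, add_mulVec]
    have hf : f = Bᵀ *ᵥ l := by
      apply mulVec_injective_of_transpose_mulVec_surjective hsurj
      calc (A + B) *ᵥ f = B *ᵥ (f + e) := by
            rw [add_mulVec, sub_eq_zero.1 h, mulVec_add, add_comm]
        _ = (A + B) *ᵥ (Bᵀ *ᵥ l) := by rw [← hl, mulVec_add, add_mulVec, hcross]
    exact ⟨l, hf, by rw [hf, add_comm] at hl; exact (add_left_cancel hl).symm⟩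
  · rintro ⟨l, rfl, rfl⟩
    rw [hcross, sub_self]

end KernelAndImageRepresentation

section Convexity

theorem convexOn_bilin_self {K E : Type*} [CommRing K] [PartialOrder K] [IsOrderedRing K]
    [AddCommGroup E] [Module K E] {s : Set E} (hs : Convex K s) (B : LinearMap.BilinForm K E)
    (hB : ∀ x ∈ s, ∀ y ∈ s, 0 ≤ B (x - y) (x - y)) : ConvexOn K s fun x => B x x := by
  refine ⟨hs, fun x hx y hy a b ha hb hab => sub_nonneg.1 ?_⟩
  have hgap : a • B x x + b • B y y - B (a • x + b • y) (a • x + b • y) =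
      a * b * B (x - y) (x - y) := by
    obtain rfl : b = 1 - a := eq_sub_of_add_eq' hab
    simp only [map_add, map_sub, map_smul, LinearMap.add_apply, LinearMap.sub_apply,
      LinearMap.smul_apply, smul_eq_mul]
    ring
  exact hgap ▸ mul_nonneg (mul_nonneg ha hb) (hB x hx y hy)

theorem lowerSemicontinuous_piecewise_top {E β : Type*} [TopologicalSpace E] [Preorder β]
    [OrderTop β] {s : Set E} [∀ x, Decidable (x ∈ s)] {g : E → β} (hs : IsClosed s)
    (hg : LowerSemicontinuousOn g s) : LowerSemicontinuous (s.piecewise g fun _ => ⊤) := by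
  intro x c hc
  replace hc : c < s.piecewise g (fun _ => ⊤) x := hc
  by_cases hx : x ∈ s
  · rw [s.piecewise_eq_of_mem _ _ hx] at hc
    filter_upwards [eventually_nhdsWithin_iff.1 (hg x hx c hc)] with y hy
    by_cases hys : y ∈ s
    · simpa only [s.piecewise_eq_of_mem _ _ hys] using hy hys
    · simpa only [s.piecewise_eq_of_notMem _ _ hys] using hc.trans_le le_top
  · rw [s.piecewise_eq_of_notMem _ _ hx] at hc
    filter_upwards [hs.isOpen_compl.mem_nhds hx] with y hy
    simpa only [s.piecewise_eq_of_notMem _ _ hy] using hc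

theorem piecewise_top_le_of_convexOn {E : Type*} [AddCommGroup E] [Module ℝ E] {s : Set E}
    [∀ x, Decidable (x ∈ s)] {q : E → ℝ} (hq : ConvexOn ℝ s q) (x y : E) {t : ℝ} (ht₀ : 0 ≤ t)
    (ht₁ : t ≤ 1) :
    s.piecewise (fun x => (q x : EReal)) (fun _ => ⊤) (t • x + (1 - t) • y) ≤
      (t : EReal) * s.piecewise (fun x => (q x : EReal)) (fun _ => ⊤) x +
        ((1 - t : ℝ) : EReal) * s.piecewise (fun x => (q x : EReal)) (fun _ => ⊤) y := by
  rcases ht₀.eq_or_lt with rfl | ht₀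
  · rw [sub_zero, zero_smul, one_smul, zero_add, EReal.coe_zero, zero_mul, EReal.coe_one, one_mul,
      zero_add]
  rcases ht₁.eq_or_lt with rfl | ht₁
  · rw [sub_self, zero_smul, one_smul, add_zero, EReal.coe_zero, zero_mul, EReal.coe_one, one_mul,
      add_zero]
  have ht₁' : 0 < 1 - t := sub_pos.2 ht₁
  by_cases hx : x ∈ s <;> by_cases hy : y ∈ s
  · have hxy : t • x + (1 - t) • y ∈ s := hq.1 hx hy ht₀.le ht₁'.le (add_sub_cancel t 1)
    simp only [s.piecewise_eq_of_mem _ _ hx, s.piecewise_eq_of_mem _ _ hy,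
      s.piecewise_eq_of_mem _ _ hxy]
    exact_mod_cast hq.2 hx hy ht₀.le ht₁'.le (add_sub_cancel t 1)
  · rw [s.piecewise_eq_of_mem _ _ hx, s.piecewise_eq_of_notMem _ _ hy,
      EReal.coe_mul_top_of_pos ht₁', ← EReal.coe_mul, EReal.coe_add_top]
    exact le_top
  · rw [s.piecewise_eq_of_notMem _ _ hx, s.piecewise_eq_of_mem _ _ hy,
      EReal.coe_mul_top_of_pos ht₀, ← EReal.coe_mul, EReal.top_add_coe]
    exact le_top
  · rw [s.piecewise_eq_of_notMem _ _ hx, s.piecewise_eq_of_notMem _ _ hy,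
      EReal.coe_mul_top_of_pos ht₀, EReal.coe_mul_top_of_pos ht₁', EReal.top_add_top]
    exact le_top

theorem properLscConvex_piecewise_top {E : Type*} [AddCommGroup E] [Module ℝ E]
    [TopologicalSpace E] {s : Set E} [∀ x, Decidable (x ∈ s)] {q : E → ℝ} (hne : s.Nonempty)
    (hs : IsClosed s) (hlsc : LowerSemicontinuousOn q s) (hconv : ConvexOn ℝ s q) :
    ProperLscConvex (s.piecewise (fun x => (q x : EReal)) fun _ => ⊤) := by
  refine ⟨?_, fun x => ?_, ?_, fun x y _ => piecewise_top_le_of_convexOn hconv x y⟩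
  · obtain ⟨x, hx⟩ := hne
    exact ⟨x, by simp [hx]⟩
  · by_cases hx : x ∈ s <;> simp [hx]
  · exact lowerSemicontinuous_piecewise_top hs <|
      continuous_coe_real_ereal.comp_lowerSemicontinuousOn hlsc EReal.coe_strictMono.monotone

end Convexity

section CyclicMonotonicity

theorem le_toReal_sub_toReal_of_mem_subdiff {E : Type*} [AddCommGroup E] {p : E → E → ℝ}
    {φ : E → EReal} {f f' e : E} (he : e ∈ subdiff p φ f) (hbot : φ f ≠ ⊥) (htop : φ f' ≠ ⊤) :
    p e (f' - f) ≤ (φ f').toReal - (φ f).toReal := by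
  have hle := he.2 f'
  lift φ f to ℝ using ⟨he.1, hbot⟩ with a
  have hbot' : φ f' ≠ ⊥ := fun h => by
    rw [h, le_bot_iff, ← EReal.coe_add] at hle
    exact EReal.coe_ne_bot _ hle
  lift φ f' to ℝ using ⟨htop, hbot'⟩ with b
  rw [← EReal.coe_add, EReal.coe_le_coe_iff] at hle
  simp only [EReal.toReal_coe]
  linarith

variable {n : ℕ}

theorem dot_eq_dotProduct (e f : Fin n → ℝ) : dot e f = e ⬝ᵥ f := rfl

theorem cycMono2_subdiff {φ : (Fin n → ℝ) → EReal} (hbot : ∀ f, φ f ≠ ⊥) :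
    CycMono2 {p | p.2 ∈ subdiff dot φ p.1} := by
  intro m _ f e hmem hclosed
  have htop : ∀ i ≤ m, φ (f (i + 1)) ≠ ⊤ := by
    intro i hi
    rcases hi.eq_or_lt with rfl | hi
    · exact hclosed ▸ (hmem 0 (Nat.zero_le _)).1
    · exact (hmem (i + 1) hi).1
  calc (0 : ℝ)
      = ∑ i ∈ Finset.range (m + 1), ((φ (f i)).toReal - (φ (f (i + 1))).toReal) := by
        rw [Finset.sum_range_sub' fun i => (φ (f i)).toReal, hclosed, sub_self]
    _ ≤ ∑ i ∈ Finset.range (m + 1), dot (e i) (f i - f (i + 1)) := by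
        refine Finset.sum_le_sum fun i hi => ?_
        have hi : i ≤ m := Finset.mem_range_succ_iff.1 hi
        have hle := le_toReal_sub_toReal_of_mem_subdiff (hmem i hi) (hbot _) (htop i hi)
        rw [dot_eq_dotProduct] at hle ⊢
        rw [← neg_sub (f (i + 1)), dotProduct_neg]
        linarith

namespace CycMono2

variable {M M' : Set ((Fin n → ℝ) × (Fin n → ℝ))}

theorem dotProduct_sub_nonneg (hM : CycMono2 M) {p q : (Fin n → ℝ) × (Fin n → ℝ)}
    (hp : p ∈ M) (hq : q ∈ M) : 0 ≤ (p.2 - q.2) ⬝ᵥ (p.1 - q.1) := by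
  let c : ℕ → (Fin n → ℝ) × (Fin n → ℝ) := fun i => if i = 1 then q else p
  have hcycle : 0 ≤ dot p.2 (p.1 - q.1) + dot q.2 (q.1 - p.1) := by
    simpa [c, Finset.sum_range_succ] using hM 1 le_rfl (fun i => (c i).1) (fun i => (c i).2)
      (fun i _ => by by_cases hi : i = 1 <;> simp [c, hi, hp, hq]) rfl
  simp only [dot_eq_dotProduct, dotProduct_sub] at hcycle
  rw [sub_dotProduct, dotProduct_sub, dotProduct_sub]
  linarith

theorem eq_of_subset_of_forall_exists_add_eq (hM' : CycMono2 M') (hsub : M ⊆ M')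
    (hsum : ∀ v, ∃ p ∈ M, p.1 + p.2 = v) : M' = M := by
  refine Set.Subset.antisymm (fun p hp => ?_) hsub
  obtain ⟨q, hq, hqp⟩ := hsum (p.1 + p.2)
  have hsnd : p.2 - q.2 = -(p.1 - q.1) := by
    rw [neg_sub, sub_eq_sub_iff_add_eq_add, add_comm, ← hqp]
  have hmono := hM'.dotProduct_sub_nonneg hp (hsub hq)
  rw [hsnd, neg_dotProduct, neg_nonneg] at hmono
  have hfst : p.1 - q.1 = 0 := eq_zero_of_dotProduct_self_nonpos hmono
  rw [hfst, neg_zero] at hsnd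
  rwa [Prod.ext (sub_eq_zero.1 hfst) (sub_eq_zero.1 hsnd)]

end CycMono2

end CyclicMonotonicity

section GeneratingFunction

theorem two_mul_dotProduct_mulVec_le_add {m : Type*} [Fintype m] {S : Matrix m m ℝ}
    (hS : S.PosSemidef) (x y : m → ℝ) :
    2 * (S *ᵥ x ⬝ᵥ y) ≤ x ⬝ᵥ S *ᵥ x + y ⬝ᵥ S *ᵥ y := by
  have hsymm : Sᵀ = S := by simpa using hS.isHermitian.eq
  have hswap : x ⬝ᵥ S *ᵥ y = S *ᵥ x ⬝ᵥ y := by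
    rw [dotProduct_mulVec, ← mulVec_transpose, hsymm]
  have hnonneg : 0 ≤ (x - y) ⬝ᵥ S *ᵥ (x - y) := by
    simpa using hS.dotProduct_mulVec_nonneg (x - y)
  rw [mulVec_sub, sub_dotProduct, dotProduct_sub, dotProduct_sub, hswap,
    dotProduct_comm y (S *ᵥ x)] at hnonneg
  linarith

theorem transpose_mulVec_dotProduct_mulVec {m n K : Type*} [Fintype m] [Fintype n] [CommRing K]
    (A : Matrix m n K) (S : Matrix n n K) (l : m → K) :
    Aᵀ *ᵥ l ⬝ᵥ S *ᵥ (Aᵀ *ᵥ l) = l ⬝ᵥ (A * S * Aᵀ) *ᵥ l := by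
  rw [← mulVec_mulVec, ← mulVec_mulVec, dotProduct_mulVec l, ← mulVec_transpose]

variable {n : ℕ} {Re R0 : Matrix (Fin n) (Fin n) ℝ}

theorem phiR_eq_piecewise (Re R0 : Matrix (Fin n) (Fin n) ℝ) :
    phiR Re R0 = (Reᵀ.mulVecLin.range : Set (Fin n → ℝ)).piecewise
      (fun f => ((1 / 2 * (f ⬝ᵥ R0 *ᵥ f) : ℝ) : EReal)) fun _ => ⊤ := by
  funext f
  exact if_congr (exists_congr fun l => eq_comm) rfl rfl

theorem phiR_transpose_mulVec (Re R0 : Matrix (Fin n) (Fin n) ℝ) (l : Fin n → ℝ) :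
    phiR Re R0 (Reᵀ *ᵥ l) = ((1 / 2 * (l ⬝ᵥ (Re * R0 * Reᵀ) *ᵥ l) : ℝ) : EReal) := by
  rw [← transpose_mulVec_dotProduct_mulVec]
  exact if_pos ⟨l, rfl⟩

theorem properLscConvex_phiR (hpos : ∀ l, 0 ≤ l ⬝ᵥ (Re * R0 * Reᵀ) *ᵥ l) :
    ProperLscConvex (phiR Re R0) := by
  have hcont : Continuous fun f : Fin n → ℝ => 1 / 2 * (f ⬝ᵥ R0 *ᵥ f) := by fun_prop
  have hnonneg : ∀ f ∈ Reᵀ.mulVecLin.range, 0 ≤ f ⬝ᵥ R0 *ᵥ f := by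
    rintro _ ⟨l, rfl⟩
    rw [mulVecLin_apply, transpose_mulVec_dotProduct_mulVec]
    exact hpos l
  have hconv : ConvexOn ℝ (Reᵀ.mulVecLin.range : Set (Fin n → ℝ)) fun f => f ⬝ᵥ R0 *ᵥ f := by
    simpa only [toBilin'_apply'] using
      convexOn_bilin_self Reᵀ.mulVecLin.range.convex (toBilin' R0) fun x hx y hy => by
        simpa only [toBilin'_apply'] using hnonneg _ (Submodule.sub_mem _ hx hy)
  rw [phiR_eq_piecewise]
  exact properLscConvex_piecewise_top ⟨0, Submodule.zero_mem _⟩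
    (Submodule.closed_of_finiteDimensional _)
    (hcont.lowerSemicontinuous.lowerSemicontinuousOn _) (hconv.smul (by norm_num))

theorem mem_subdiff_phiR_transpose_mulVec (hS : (Re * R0 * Reᵀ).PosSemidef) {l e : Fin n → ℝ}
    (he : Re *ᵥ e = (Re * R0 * Reᵀ) *ᵥ l) : e ∈ subdiff dot (phiR Re R0) (Reᵀ *ᵥ l) := by
  refine ⟨by rw [phiR_transpose_mulVec]; exact EReal.coe_ne_top _, fun f' => ?_⟩
  by_cases hf' : ∃ k, f' = Reᵀ *ᵥ k
  · obtain ⟨k, rfl⟩ := hf'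
    have hpair : dot e (Reᵀ *ᵥ k - Reᵀ *ᵥ l) = (Re * R0 * Reᵀ) *ᵥ l ⬝ᵥ (k - l) := by
      rw [dot_eq_dotProduct, ← mulVec_sub, dotProduct_mulVec, vecMul_transpose, he]
    have htangent := two_mul_dotProduct_mulVec_le_add hS l k
    rw [phiR_transpose_mulVec, phiR_transpose_mulVec, hpair, ← EReal.coe_add,
      EReal.coe_le_coe_iff, dotProduct_sub, dotProduct_comm _ l]
    linarith
  · exact le_top.trans_eq (if_neg hf').symm

end GeneratingFunction

theorem linearResistive_generated_by_phiR_general {n : ℕ}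
    (Rf Re R0 : Matrix (Fin n) (Fin n) ℝ)
    (hpsd : (Rf * Re.transpose).PosSemidef)
    (hrank : (Matrix.fromCols Rf Re).rank = n)
    (hR0eq : Re * R0 * Re.transpose = Re * Rf.transpose) :
    ProperLscConvex (phiR Re R0) ∧
    {p : (Fin n → ℝ) × (Fin n → ℝ) | Rf.mulVec p.1 - Re.mulVec p.2 = 0} =
      {p : (Fin n → ℝ) × (Fin n → ℝ) | p.2 ∈ subdiff dot (phiR Re R0) p.1} ∧
    MaxCycMono2 {p : (Fin n → ℝ) × (Fin n → ℝ) | Rf.mulVec p.1 - Re.mulVec p.2 = 0} := by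
  have hsymm : Rf * Reᵀ = Re * Rfᵀ := by simpa using hpsd.isHermitian.eq.symm
  have hS : (Re * R0 * Reᵀ).PosSemidef := by rwa [hR0eq, ← hsymm]
  have hsurj : Function.Surjective (Rf + Re)ᵀ.mulVec := transpose_add_mulVec_surjective
    (by simpa using hpsd.dotProduct_mulVec_nonneg) (by rw [hrank, Fintype.card_fin])
  have himage : ∀ f e, Rf *ᵥ f - Re *ᵥ e = 0 ↔ ∃ l, f = Reᵀ *ᵥ l ∧ e = Rfᵀ *ᵥ l :=
    fun _ _ => mulVec_sub_mulVec_eq_zero_iff_exists_transpose hsymm hsurj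
  have hsum : ∀ v, ∃ p ∈ {p : (Fin n → ℝ) × (Fin n → ℝ) | Rf *ᵥ p.1 - Re *ᵥ p.2 = 0},
      p.1 + p.2 = v := by
    intro v
    obtain ⟨l, rfl⟩ := hsurj v
    refine ⟨(Reᵀ *ᵥ l, Rfᵀ *ᵥ l), (himage _ _).2 ⟨l, rfl, rfl⟩, ?_⟩
    rw [transpose_add, add_mulVec, add_comm]
  have hproper := properLscConvex_phiR (by simpa using hS.dotProduct_mulVec_nonneg)
  have hcyc := cycMono2_subdiff hproper.2.1
  have hgen := hcyc.eq_of_subset_of_forall_exists_add_eq (fun ⟨f, e⟩ hp => by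
    obtain ⟨l, rfl, rfl⟩ := (himage f e).1 hp
    exact mem_subdiff_phiR_transpose_mulVec hS (by rw [mulVec_mulVec, hR0eq])) hsum
  exact ⟨hproper, hgen.symm, hgen ▸ hcyc, fun M' hM' hsub =>
    hM'.eq_of_subset_of_forall_exists_add_eq hsub hsum⟩

/-- A linear resistive structure is generated by the convex function `φ_R`;
in particular it is maximal cyclically monotone. -/
theorem linearResistive_generated_by_phiR {n : ℕ}
    (Rf Re R0 : Matrix (Fin n) (Fin n) ℝ)
    (hsym : Rf * Re.transpose = Re * Rf.transpose)
    (hpsd : (Rf * Re.transpose).PosSemidef)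
    (hrank : (Matrix.fromCols Rf Re).rank = n)
    (hR0 : R0.PosSemidef)
    (hR0eq : Re * R0 * Re.transpose = Re * Rf.transpose) :
    ProperLscConvex (phiR Re R0) ∧
    {p : (Fin n → ℝ) × (Fin n → ℝ) | Rf.mulVec p.1 - Re.mulVec p.2 = 0} =
      {p : (Fin n → ℝ) × (Fin n → ℝ) | p.2 ∈ subdiff dot (phiR Re R0) p.1} ∧
    MaxCycMono2 {p : (Fin n → ℝ) × (Fin n → ℝ) | Rf.mulVec p.1 - Re.mulVec p.2 = 0} :=
  linearResistive_generated_by_phiR_general Rf Re R0 hpsd hrank hR0eq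
end
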